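/- Let q ∈ ℋ_e and let f(x) = ψ(x)^{-1}∫_{−∞}^{x}(q(y) − Φ(q))ψ(y)dy. Then for every n ∈ ℕ₀: ∫_ℝ f(y) H_n(y) ψ(y) dy = −(1/(n+1)) ∫_ℝ q(y) H_{n+1}(y) ψ(y) dy. -/

import Mathlib

open MeasureTheory Polynomial

/-- Density of the standard normal distribution. -/
noncomputable def gaussD (x : ℝ) : ℝ := (Real.sqrt (2 * Real.pi))⁻¹ * Real.exp (-(x ^ 2) / 2)

/-- Expectation of `g` with respect to the standard normal distribution, `Φ(g)`. -/
noncomputable def PhiInt (g : ℝ → ℝ) : ℝ := ∫ x, g x * gaussD x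

/-- The class `ℋ` of monotonically decreasing, left-continuous functions `ℝ → [0,1]`. -/
def memH (h : ℝ → ℝ) : Prop :=
  (∀ x, h x ∈ Set.Icc (0 : ℝ) 1) ∧ Antitone h ∧
    ∀ x, ContinuousWithinAt h (Set.Iic x) x

/-- The class `ℋ_d` of members of `ℋ` that are differentiable with bounded derivative. -/
def memHd (h : ℝ → ℝ) : Prop :=
  memH h ∧ Differentiable ℝ h ∧ ∃ M : ℝ, ∀ x, |deriv h x| ≤ M

/-- The class `ℋ_e = ℋ_d ∪ {x ↦ x·h(x) : h ∈ ℋ_d}`. -/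
def memHe (q : ℝ → ℝ) : Prop :=
  memHd q ∨ ∃ h : ℝ → ℝ, memHd h ∧ ∀ x, q x = x * h x

/-- The Stein solution `f` for the function `q`. -/
noncomputable def steinF0 (q : ℝ → ℝ) (x : ℝ) : ℝ :=
  (gaussD x)⁻¹ * ∫ y in Set.Iic x, (q y - PhiInt q) * gaussD y

/-- The `n`-th probabilists' Hermite polynomial, evaluated at a real number. -/
noncomputable def hermiteR (n : ℕ) (y : ℝ) : ℝ := Polynomial.aeval y (Polynomial.hermite n)

lemma integrable_poly_exp (b : ℝ) (hb : 0 < b) (P : ℝ[X]) :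
    Integrable (fun x : ℝ => P.eval x * Real.exp (-b * x ^ 2)) := by
  induction P using Polynomial.induction_on' with
  | add p q hp hq =>
    simp only [eval_add, add_mul]
    exact hp.add hq
  | monomial k a =>
    have h := integrable_rpow_mul_exp_neg_mul_sq hb (s := (k : ℝ))
      (by have : (0 : ℝ) ≤ k := Nat.cast_nonneg k
          linarith)
    simp only [Real.rpow_natCast] at h
    simp only [eval_monomial, mul_assoc]
    exact h.const_mul a

lemma integrable_q_poly_exp (b : ℝ) (hb : 0 < b) (P : ℝ[X]) (g : ℝ → ℝ) (hg : Continuous g)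
    (C : ℝ) (hC : ∀ x, |g x| ≤ C * (1 + x ^ 2)) :
    Integrable (fun x : ℝ => g x * P.eval x * Real.exp (-b * x ^ 2)) := by
  have h := (integrable_poly_exp b hb (Polynomial.C C * (1 + X ^ 2) * P)).norm
  refine h.mono' (by
    have := P.continuous
    exact Continuous.aestronglyMeasurable (by fun_prop)) (Filter.Eventually.of_forall fun x => ?_)
  have hC0 : 0 ≤ C * (1 + x ^ 2) := (abs_nonneg _).trans (hC x)
  simp only [Real.norm_eq_abs, abs_mul, eval_mul, eval_add, eval_one, eval_pow, eval_X, eval_C]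
  rw [← abs_mul C, abs_of_nonneg hC0]
  gcongr
  exact hC x

lemma gaussD_eq (x : ℝ) :
    gaussD x = (Real.sqrt (2 * Real.pi))⁻¹ * Real.exp (-(1/2) * x ^ 2) := by
  unfold gaussD; congr 2; ring

lemma gaussD_pos (x : ℝ) : 0 < gaussD x := by
  unfold gaussD; positivity

lemma gaussD_cont : Continuous gaussD := by
  unfold gaussD; fun_prop

lemma hermiteR_eval (n : ℕ) (y : ℝ) :
    hermiteR n y = ((hermite n).map (Int.castRingHom ℝ)).eval y := by
  unfold hermiteR; rw [eval_map, aeval_def]; rfl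

lemma derivative_hermite_succ' (n : ℕ) :
    derivative (hermite (n + 1)) = ((n : ℤ[X]) + 1) * hermite n := by
  induction n with
  | zero => simp
  | succ n ih =>
    rw [hermite_succ (n + 1), derivative_sub, derivative_mul, ih, derivative_mul, hermite_succ n]
    simp
    ring

lemma hasDerivAt_hermiteR (n : ℕ) (y : ℝ) :
    HasDerivAt (hermiteR (n + 1)) (((n : ℝ) + 1) * hermiteR n y) y := by
  have h := Polynomial.hasDerivAt_aeval (hermite (n + 1)) y
  rw [derivative_hermite_succ'] at h
  have e : (aeval y) (((n : ℤ[X]) + 1) * hermite n) = ((n : ℝ) + 1) * hermiteR n y := by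
    simp [hermiteR]
  rw [e] at h
  exact h

lemma hasDerivAt_gaussD (y : ℝ) : HasDerivAt gaussD (-y * gaussD y) y := by
  unfold gaussD
  have h1 : HasDerivAt (fun x : ℝ => -(x ^ 2) / 2) (-y) y := by
    have := ((hasDerivAt_pow 2 y).neg).div_const 2
    exact this.congr_deriv (by simp; ring)
  exact ((h1.exp).const_mul ((Real.sqrt (2 * Real.pi))⁻¹)).congr_deriv (by ring)

lemma hasDerivAt_hermite_gauss (n : ℕ) (y : ℝ) :
    HasDerivAt (fun y => hermiteR n y * gaussD y) (-(hermiteR (n + 1) y * gaussD y)) y := by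
  have h := (Polynomial.hasDerivAt_aeval (hermite n) y).mul (hasDerivAt_gaussD y)
  refine HasDerivAt.congr_deriv h ?_
  simp only [hermiteR, hermite_succ, map_sub, map_mul, aeval_X]
  ring

lemma integrable_g_hermite (n : ℕ) (g : ℝ → ℝ) (hg : Continuous g)
    (C : ℝ) (hC : ∀ x, |g x| ≤ C * (1 + x ^ 2)) :
    Integrable (fun x : ℝ => g x * hermiteR n x * gaussD x) := by
  have h := (integrable_q_poly_exp (1/2) (by norm_num) ((hermite n).map (Int.castRingHom ℝ))
    g hg C hC).const_mul ((Real.sqrt (2 * Real.pi))⁻¹)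
  refine h.congr (Filter.Eventually.of_forall fun x => ?_)
  simp only [gaussD_eq, hermiteR_eval]
  ring

lemma integrable_hermite (n : ℕ) : Integrable (fun x : ℝ => hermiteR n x * gaussD x) := by
  have := integrable_g_hermite n (fun _ => 1) continuous_const 1
    (fun x => by simp; positivity)
  simpa using this

lemma integral_hermite_succ (n : ℕ) : ∫ x, hermiteR (n + 1) x * gaussD x = 0 := by
  have h := integral_eq_zero_of_hasDerivAt_of_integrable (hasDerivAt_hermite_gauss n)
    (integrable_hermite (n + 1)).neg (integrable_hermite n)
  rw [integral_neg] at h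
  linarith

lemma hermiteR_zero (x : ℝ) : hermiteR 0 x = 1 := by simp [hermiteR]

lemma integral_gaussD : ∫ x, gaussD x = 1 := by
  simp only [gaussD_eq]
  rw [integral_const_mul, integral_gaussian]
  rw [show Real.pi / (1 / 2) = 2 * Real.pi by ring]
  exact inv_mul_cancel₀ (by positivity)

lemma memHe_props (q : ℝ → ℝ) (hq : memHe q) :
    Continuous q ∧ ∀ x, |q x| ≤ 1 + x ^ 2 := by
  rcases hq with ⟨⟨h, -, -⟩, hd, -⟩ | ⟨h, ⟨⟨hb, -, -⟩, hd, -⟩, he⟩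
  · refine ⟨hd.continuous, fun x => ?_⟩
    have := h x
    rw [abs_of_nonneg this.1]
    nlinarith [this.2, sq_nonneg x]
  · obtain rfl : q = fun x => x * h x := funext he
    have := hd.continuous
    refine ⟨by fun_prop, fun x => ?_⟩
    have h1 := hb x
    rw [abs_mul, abs_of_nonneg h1.1]
    nlinarith [mul_le_mul_of_nonneg_left h1.2 (abs_nonneg x), sq_abs x, sq_nonneg (|x| - 1),
      abs_nonneg x]

lemma tail_bound (g : ℝ → ℝ) (hg : Continuous g) (C : ℝ) (hC : ∀ x, |g x| ≤ C * (1 + x ^ 2))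
    (h0 : ∫ x, g x * gaussD x = 0) :
    ∃ K, ∀ x, |∫ y in Set.Iic x, g y * gaussD y| ≤ K * Real.exp (-(1/4) * x ^ 2) := by
  have hI : Integrable (fun x => g x * gaussD x) := by
    simpa [hermiteR_zero] using integrable_g_hermite 0 g hg C hC
  set w : ℝ → ℝ := fun y => (Real.sqrt (2 * Real.pi))⁻¹ * |g y * Real.exp (-(1/4) * y ^ 2)| with hw
  have hwI : Integrable w := by
    have := (integrable_q_poly_exp (1/4) (by norm_num) 1 g hg C hC).norm.const_mul
      ((Real.sqrt (2 * Real.pi))⁻¹)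
    simpa [hw] using this
  have hw0 : ∀ y, 0 ≤ w y := fun y => by positivity
  have key : ∀ x y : ℝ, x ^ 2 ≤ y ^ 2 →
      ‖g y * gaussD y‖ ≤ w y * Real.exp (-(1/4) * x ^ 2) := by
    intro x y hxy
    have e : gaussD y = (Real.sqrt (2 * Real.pi))⁻¹ *
        (Real.exp (-(1/4) * y ^ 2) * Real.exp (-(1/4) * y ^ 2)) := by
      rw [gaussD_eq, ← Real.exp_add]; congr 2; ring
    have e2 : ‖g y * gaussD y‖ = w y * Real.exp (-(1/4) * y ^ 2) := by
      simp only [hw]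
      rw [e, Real.norm_eq_abs, abs_mul, abs_mul, abs_mul, abs_mul, Real.abs_exp,
        abs_of_nonneg (by positivity : 0 ≤ (Real.sqrt (2 * Real.pi))⁻¹)]
      ring
    rw [e2]
    have := hw0 y
    gcongr ?_ * ?_
    exact Real.exp_le_exp.2 (by linarith)
  have bd : ∀ (x : ℝ) (s : Set ℝ), MeasurableSet s → (∀ y ∈ s, x ^ 2 ≤ y ^ 2) →
      |∫ y in s, g y * gaussD y| ≤ (∫ y, w y) * Real.exp (-(1/4) * x ^ 2) := by
    intro x s hs h
    have h1 : ‖∫ y in s, g y * gaussD y‖ ≤ ∫ y in s, w y * Real.exp (-(1/4) * x ^ 2) :=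
      norm_integral_le_of_norm_le (hwI.mul_const _).integrableOn
        ((ae_restrict_iff' hs).2 (Filter.Eventually.of_forall fun y hy => key x y (h y hy)))
    refine h1.trans ?_
    rw [integral_mul_const]
    exact mul_le_mul_of_nonneg_right
      (setIntegral_le_integral hwI (Filter.Eventually.of_forall hw0)) (Real.exp_pos _).le
  refine ⟨∫ y, w y, fun x => ?_⟩
  rcases le_total x 0 with hx | hx
  · refine bd x _ measurableSet_Iic fun y hy => ?_
    have : y ≤ x := hy
    nlinarith
  · have hs := integral_add_compl (measurableSet_Iic (a := x)) hI
    rw [h0, Set.compl_Iic] at hs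
    rw [eq_neg_of_add_eq_zero_left hs, abs_neg]
    refine bd x _ measurableSet_Ioi fun y hy => ?_
    have : x < y := hy
    nlinarith

lemma hasDerivAt_Iic (F : ℝ → ℝ) (hF : Continuous F) (hI : Integrable F) (x : ℝ) :
    HasDerivAt (fun x => ∫ y in Set.Iic x, F y) (F x) x := by
  have h := (intervalIntegral.integral_hasDerivAt_right (hF.intervalIntegrable 0 x)
    (hF.stronglyMeasurableAtFilter _ _) hF.continuousAt).const_add (∫ y in Set.Iic 0, F y)
  refine h.congr_of_eventuallyEq (Filter.Eventually.of_forall fun z => ?_)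
  have := intervalIntegral.integral_Iic_sub_Iic (hI.integrableOn (s := Set.Iic 0))
    (hI.integrableOn (s := Set.Iic z))
  simp only
  rw [← this]; ring

/-- for `q ∈ ℋ_e` and all `n ∈ ℕ₀`,
`∫ f·H_n·ψ = −(1/(n+1)) ∫ q·H_{n+1}·ψ`. -/
theorem stein_solution_hermite_identity (q : ℝ → ℝ) (hq : memHe q) (n : ℕ) :
    ∫ y, steinF0 q y * hermiteR n y * gaussD y =
      -(1 / ((n : ℝ) + 1)) * ∫ y, q y * hermiteR (n + 1) y * gaussD y := by
  obtain ⟨qc, qb⟩ := memHe_props q hq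
  have qb' : ∀ x, |q x| ≤ 1 * (1 + x ^ 2) := by simpa using qb
  set c := PhiInt q with hc
  set g : ℝ → ℝ := fun y => q y - c with hgd
  have hg : Continuous g := by fun_prop
  have hC : ∀ x, |g x| ≤ (1 + |c|) * (1 + x ^ 2) := fun x => by
    have := abs_sub (q x) c
    nlinarith [qb x, mul_nonneg (abs_nonneg c) (sq_nonneg x)]
  have hqI : Integrable (fun x => q x * gaussD x) := by
    simpa [hermiteR_zero] using integrable_g_hermite 0 q qc 1 qb'
  have hψI : Integrable gaussD := by simpa [hermiteR_zero] using integrable_hermite 0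
  have hgI : Integrable (fun x => g x * gaussD x) := by
    simpa [hermiteR_zero] using integrable_g_hermite 0 g hg _ hC
  have h0 : ∫ x, g x * gaussD x = 0 := by
    simp only [hgd, sub_mul]
    rw [integral_sub hqI (hψI.const_mul c), integral_const_mul, integral_gaussD, hc, PhiInt]
    ring
  obtain ⟨K, hK⟩ := tail_bound g hg _ hC h0
  set G : ℝ → ℝ := fun x => ∫ y in Set.Iic x, g y * gaussD y with hG
  have hGd : ∀ x, HasDerivAt G (g x * gaussD x) x :=
    hasDerivAt_Iic _ (hg.mul gaussD_cont) hgI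
  have hGc : Continuous G := continuous_iff_continuousAt.2 fun x => (hGd x).continuousAt
  have hermc : ∀ m, Continuous (hermiteR m) := fun m => by
    unfold hermiteR; exact Polynomial.continuous_aeval _
  have hGI : ∀ m, Integrable (fun x => hermiteR m x * G x) := fun m => by
    have h := ((integrable_poly_exp (1/4) (by norm_num)
      ((hermite m).map (Int.castRingHom ℝ))).norm).const_mul K
    refine h.mono' ((hermc m).mul hGc).aestronglyMeasurable
      (Filter.Eventually.of_forall fun x => ?_)
    simp only [← hermiteR_eval, Real.norm_eq_abs, abs_mul, Real.abs_exp]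
    have := mul_le_mul_of_nonneg_left (hK x) (abs_nonneg (hermiteR m x))
    calc _ ≤ _ := this
      _ = _ := by ring
  have hgm := integrable_g_hermite (n + 1) g hg _ hC
  have hqm := integrable_g_hermite (n + 1) q qc _ qb'
  have hgm' : Integrable (fun x => hermiteR (n + 1) x * (g x * gaussD x)) :=
    hgm.congr (Filter.Eventually.of_forall fun x => by simp only; ring)
  have hu' : Integrable (fun x => (((n : ℝ) + 1) * hermiteR n x) * G x) :=
    ((hGI n).const_mul ((n : ℝ) + 1)).congr
      (Filter.Eventually.of_forall fun x => by simp only; ring)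
  have ibp := integral_mul_deriv_eq_deriv_mul_of_integrable
    (u := hermiteR (n + 1)) (v := G)
    (fun x _ => hasDerivAt_hermiteR n x) (fun x _ => hGd x) hgm' hu' (hGI (n + 1))
  have e1 : ∫ y, steinF0 q y * hermiteR n y * gaussD y = ∫ y, hermiteR n y * G y := by
    refine integral_congr_ae (Filter.Eventually.of_forall fun y => ?_)
    have := (gaussD_pos y).ne'
    simp only [steinF0, hG, hgd, ← hc]
    field_simp
  have e2 : ∫ x, hermiteR (n + 1) x * (g x * gaussD x)
      = ∫ y, q y * hermiteR (n + 1) y * gaussD y := by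
    have : ∀ x, hermiteR (n + 1) x * (g x * gaussD x) =
      q x * hermiteR (n + 1) x * gaussD x - c * (hermiteR (n + 1) x * gaussD x) := fun x => by
      simp only [hgd]; ring
    simp only [this]
    rw [integral_sub hqm ((integrable_hermite (n + 1)).const_mul c), integral_const_mul,
      integral_hermite_succ]
    ring
  have e3 : ∫ x, (((n : ℝ) + 1) * hermiteR n x) * G x
      = ((n : ℝ) + 1) * ∫ x, hermiteR n x * G x := by
    rw [← integral_const_mul]; simp only [mul_assoc]
  rw [e2, e3] at ibp
  rw [e1, ibp]
  have : (n : ℝ) + 1 ≠ 0 := by positivity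
  field_simp
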